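/- For every integer p ≥ 2 and every real κ > 0, ( 3/2 + 1/p − √((1/2 + 1/p)² + (κ/p)²) ) / ( p ( 1/2 − 1/p + √((1/2 + 1/p)² + (κ/p)²) )² ) ≤ ẽ₂(p,κ) ≤ 1 / ( p ( 1/2 + √(1/4 + (κ/p)²) ) ). -/

import Mathlib

open MeasureTheory intervalIntegral

/-- `mInt p κ ℓ = ∫_{-1}^1 u^ℓ (1-u²)^{(p-3)/2} exp(κ u) du`. -/
noncomputable def mInt (p : ℕ) (κ : ℝ) (ℓ : ℕ) : ℝ :=
  ∫ u in (-1 : ℝ)..1, u ^ ℓ * (1 - u ^ 2) ^ (((p : ℝ) - 3) / 2) * Real.exp (κ * u)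

/-- `e₁(p,κ) = E[U]` under `FvML_p(θ,κ)`. -/
noncomputable def e1 (p : ℕ) (κ : ℝ) : ℝ := mInt p κ 1 / mInt p κ 0

/-- `e₂(p,κ) = E[U²]` under `FvML_p(θ,κ)`. -/
noncomputable def e2 (p : ℕ) (κ : ℝ) : ℝ := mInt p κ 2 / mInt p κ 0

/-- `ẽ₂(p,κ) = Var[U]` under `FvML_p(θ,κ)`. -/
noncomputable def etilde2 (p : ℕ) (κ : ℝ) : ℝ := e2 p κ - (e1 p κ) ^ 2

/-!
Let `g p` be the mean of `U` divided by `κ`. Integration by parts yields the variance formula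
`Var U = 1 - (p - 1) g p - κ² (g p)²`, which decreases in `g p`, and the recurrence
`g p * (p + κ² g (p + 2)) = 1`. By symmetrisation, `κ Cov(U, U²) ≥ 0`, which amounts to
`κ² g (p + 2) ≤ κ² g p`; hence `g p` is at least the positive root of `κ² x² + p x = 1`. The
variance formula evaluated at this root returns the root itself, which is the upper bound. The
same estimate in dimension `p + 2` bounds `g p` from above through the recurrence, and this
gives the lower bound.
-/

open Real Set

/-- The `ℓ`-th moment (not normalised) of the exponential tilt `w u * exp (κ u)` of a weight `w`. -/
noncomputable def tiltedMoment (w : ℝ → ℝ) (κ : ℝ) (ℓ : ℕ) : ℝ :=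
  ∫ u, u ^ ℓ * w u * exp (κ * u)

lemma mul_mul_sinh_nonneg (κ t : ℝ) : 0 ≤ κ * (t * sinh (κ * t)) := by
  rw [← mul_assoc]
  rcases le_total 0 (κ * t) with h | h
  · exact mul_nonneg h (sinh_nonneg_iff.2 h)
  · exact mul_nonneg_of_nonpos_of_nonpos h (sinh_nonpos_iff.2 h)

/-- The integrand over the plane whose integral is twice the covariance of `u` and `u ^ 2` under
the tilted weight, times the square of its total mass: it is `(x - y) (x² - y²)`, factored,
against the product of two copies of the tilted weight. -/
noncomputable def covarianceKernel (w : ℝ → ℝ) (κ : ℝ) (z : ℝ × ℝ) : ℝ :=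
  (z.1 - z.2) ^ 2 * (z.1 + z.2) * (w z.1 * w z.2) * exp (κ * (z.1 + z.2))

section CovarianceKernel

variable {w : ℝ → ℝ} {κ : ℝ}

lemma integrable_and_integral_covarianceKernel
    (hw_int : ∀ ℓ : ℕ, Integrable fun u => u ^ ℓ * w u * exp (κ * u)) :
    Integrable (covarianceKernel w κ) ∧ ∫ z, covarianceKernel w κ z
      = 2 * (tiltedMoment w κ 0 * tiltedMoment w κ 3
        - tiltedMoment w κ 1 * tiltedMoment w κ 2) := by
  let G (i j : ℕ) (z : ℝ × ℝ) : ℝ :=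
    (z.1 ^ i * w z.1 * exp (κ * z.1)) * (z.2 ^ j * w z.2 * exp (κ * z.2))
  have hG (i j : ℕ) : Integrable (G i j) := (hw_int i).mul_prod (hw_int j)
  have integral_G (i j : ℕ) : ∫ z, G i j z = tiltedMoment w κ i * tiltedMoment w κ j :=
    integral_prod_mul (fun u => u ^ i * w u * exp (κ * u)) fun u => u ^ j * w u * exp (κ * u)
  have hkernel : covarianceKernel w κ = (G 3 0 - G 2 1) - (G 1 2 - G 0 3) := by
    funext z
    simp only [covarianceKernel, G, Pi.sub_apply, mul_add, exp_add]
    ring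
  rw [hkernel]
  refine ⟨((hG 3 0).sub (hG 2 1)).sub ((hG 1 2).sub (hG 0 3)), ?_⟩
  rw [integral_sub' ((hG 3 0).sub (hG 2 1)) ((hG 1 2).sub (hG 0 3)),
    integral_sub' (hG 3 0) (hG 2 1), integral_sub' (hG 1 2) (hG 0 3)]
  simp only [integral_G]
  ring

lemma mul_covarianceKernel_add_neg (hw : w.Even) (z : ℝ × ℝ) :
    κ * (covarianceKernel w κ z + covarianceKernel w κ (-z))
      = 2 * (z.1 - z.2) ^ 2 * (w z.1 * w z.2)
        * (κ * ((z.1 + z.2) * sinh (κ * (z.1 + z.2)))) := by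
  simp only [covarianceKernel, Prod.fst_neg, Prod.snd_neg, hw.eq, sinh_eq,
    show κ * (-z.1 + -z.2) = -(κ * (z.1 + z.2)) by ring]
  ring

lemma mul_tiltedMoment_mul_sub_nonneg (hw₀ : ∀ u, 0 ≤ w u) (hw : w.Even)
    (hw_int : ∀ ℓ : ℕ, Integrable fun u => u ^ ℓ * w u * exp (κ * u)) :
    0 ≤ κ * (tiltedMoment w κ 0 * tiltedMoment w κ 3
      - tiltedMoment w κ 1 * tiltedMoment w κ 2) := by
  obtain ⟨hkernel, integral_kernel⟩ := integrable_and_integral_covarianceKernel hw_int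
  have hsymm : 0 ≤ ∫ z, κ * (covarianceKernel w κ z + covarianceKernel w κ (-z)) :=
    integral_nonneg fun z => by
      rw [mul_covarianceKernel_add_neg hw]
      exact mul_nonneg (mul_nonneg (by positivity) (mul_nonneg (hw₀ _) (hw₀ _)))
        (mul_mul_sinh_nonneg κ _)
  rw [MeasureTheory.integral_const_mul, integral_add hkernel hkernel.comp_neg,
    integral_neg_eq_self (covarianceKernel w κ), integral_kernel] at hsymm
  linarith

end CovarianceKernel

/-- The positive root of `κ² x² + q x = 1` for `0 < q`, in a form which remains valid at
`κ = 0`. -/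
noncomputable def quadRoot (q κ : ℝ) : ℝ := 1 / (q / 2 + √((q / 2) ^ 2 + κ ^ 2))

section QuadRoot

variable {q : ℝ} (κ : ℝ)

lemma quadRoot_pos (hq : 0 < q) : 0 < quadRoot q κ := by
  unfold quadRoot
  positivity

lemma sq_mul_quadRoot (hq : 0 < q) :
    κ ^ 2 * quadRoot q κ = √((q / 2) ^ 2 + κ ^ 2) - q / 2 := by
  have hsq : √((q / 2) ^ 2 + κ ^ 2) ^ 2 = (q / 2) ^ 2 + κ ^ 2 := sq_sqrt (by positivity)
  rw [quadRoot, mul_one_div, div_eq_iff (by positivity)]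
  linear_combination -hsq

lemma mul_quadRoot_add_sq (hq : 0 < q) :
    q * quadRoot q κ + κ ^ 2 * quadRoot q κ ^ 2 = 1 := by
  have hne : q / 2 + √((q / 2) ^ 2 + κ ^ 2) ≠ 0 := by positivity
  have hone : (q / 2 + √((q / 2) ^ 2 + κ ^ 2)) * quadRoot q κ = 1 := mul_one_div_cancel hne
  linear_combination hone + quadRoot q κ * sq_mul_quadRoot κ hq

lemma quadRoot_le_of_one_le {κ x : ℝ} (hq : 0 < q) (hx : 0 ≤ x)
    (h : 1 ≤ q * x + κ ^ 2 * x ^ 2) : quadRoot q κ ≤ x := by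
  by_contra! hlt
  have hlin : q * x < q * quadRoot q κ := by gcongr
  have hquad : κ ^ 2 * x ^ 2 ≤ κ ^ 2 * quadRoot q κ ^ 2 := by gcongr
  linarith [mul_quadRoot_add_sq κ hq]

lemma mul_sqrt_sq_add_div_sq (hq : 0 < q) (a : ℝ) :
    q * √(a ^ 2 + (κ / q) ^ 2) = √((q * a) ^ 2 + κ ^ 2) := by
  rw [show (q * a) ^ 2 + κ ^ 2 = q ^ 2 * (a ^ 2 + (κ / q) ^ 2) by field_simp,
    sqrt_mul (sq_nonneg q), sqrt_sq hq.le]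

end QuadRoot

/-- The density of `⟨X, θ⟩` for `X` uniform on the unit sphere of `ℝᵖ`, up to normalisation; the
dimension `p` may be any real number. Outside `[-1, 1]` the power has a negative base and is a
junk value. -/
noncomputable def fvmlWeight (p u : ℝ) : ℝ := (1 - u ^ 2) ^ ((p - 3) / 2)

/-- The moments `m_ℓ(p, κ)` for a real dimension `p`. -/
noncomputable def fvmlMoment (p κ : ℝ) (ℓ : ℕ) : ℝ :=
  ∫ u in (-1 : ℝ)..1, u ^ ℓ * fvmlWeight p u * exp (κ * u)

/-- The variance `ẽ₂(p, κ)` for a real dimension `p`. -/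
noncomputable def fvmlVariance (p κ : ℝ) : ℝ :=
  fvmlMoment p κ 2 / fvmlMoment p κ 0 - (fvmlMoment p κ 1 / fvmlMoment p κ 0) ^ 2

/-- The mean of `U = ⟨X, θ⟩` divided by `κ`, that is `I_{p/2}(κ) / (κ I_{p/2-1}(κ))` for the
modified Bessel functions `I`. It is encoded as `E[1 - U²] / (p - 1)`, which makes sense at
`κ = 0`; see `fvmlMoment_one_div_zero`. -/
noncomputable def meanQuotient (p κ : ℝ) : ℝ :=
  fvmlMoment (p + 2) κ 0 / ((p - 1) * fvmlMoment p κ 0)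

lemma one_sub_sq_nonneg_of_mem_Icc {u : ℝ} (hu : u ∈ Icc (-1 : ℝ) 1) : 0 ≤ 1 - u ^ 2 := by
  nlinarith [hu.1, hu.2]

lemma one_sub_sq_pos_of_mem_Ioo {u : ℝ} (hu : u ∈ Ioo (-1 : ℝ) 1) : 0 < 1 - u ^ 2 := by
  nlinarith [hu.1, hu.2]

lemma intervalIntegrable_one_sub_sq_rpow {r : ℝ} (hr : -1 < r) :
    IntervalIntegrable (fun u : ℝ => (1 - u ^ 2) ^ r) volume (-1) 1 := by
  have right_half : IntervalIntegrable (fun u : ℝ => (1 - u ^ 2) ^ r) volume 0 1 := by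
    have hsing : IntervalIntegrable (fun u : ℝ => (1 - u) ^ r) volume 0 1 := by
      simpa using (intervalIntegrable_rpow' (a := 1) (b := 0) hr).comp_sub_left 1
    have hcont : ContinuousOn (fun u : ℝ => (1 + u) ^ r) (uIcc 0 1) := by
      refine ContinuousOn.rpow_const (by fun_prop) fun u hu => Or.inl ?_
      rw [uIcc_of_le zero_le_one] at hu
      linarith [hu.1]
    refine (hsing.mul_continuousOn hcont).congr fun u hu => ?_
    rw [uIoc_of_le zero_le_one] at hu
    simp only [← mul_rpow (show 0 ≤ 1 - u by linarith [hu.2]) (show 0 ≤ 1 + u by linarith [hu.1])]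
    ring_nf
  have left_half : IntervalIntegrable (fun u : ℝ => (1 - u ^ 2) ^ r) volume (-1) 0 := by
    simpa using ((IntervalIntegrable.iff_comp_neg (by simp)).1 right_half).symm
  exact left_half.trans right_half

section Moments

variable {p : ℝ} (κ : ℝ)

lemma fvmlWeight_even (p : ℝ) : (fvmlWeight p).Even := fun u => by
  simp only [fvmlWeight, neg_sq]

lemma fvmlWeight_add_two (hp : 1 < p) {u : ℝ} (hu : u ∈ Icc (-1 : ℝ) 1) :
    fvmlWeight (p + 2) u = fvmlWeight p u * (1 - u ^ 2) := by
  rw [fvmlWeight, show (p + 2 - 3) / 2 = (p - 3) / 2 + 1 by ring,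
    rpow_add_one' (one_sub_sq_nonneg_of_mem_Icc hu) (by linarith), fvmlWeight]

lemma intervalIntegrable_fvmlMoment (hp : 1 < p) (ℓ : ℕ) :
    IntervalIntegrable (fun u : ℝ => u ^ ℓ * fvmlWeight p u * exp (κ * u)) volume (-1) 1 :=
  ((intervalIntegrable_one_sub_sq_rpow (by linarith)).continuousOn_mul
    (by fun_prop)).mul_continuousOn (by fun_prop)

lemma fvmlMoment_zero_pos (hp : 1 < p) : 0 < fvmlMoment p κ 0 := by
  refine intervalIntegral_pos_of_pos_on (intervalIntegrable_fvmlMoment κ hp 0)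
    (fun u hu => ?_) (by norm_num)
  have hweight : 0 < fvmlWeight p u := rpow_pos_of_pos (one_sub_sq_pos_of_mem_Ioo hu) _
  positivity

lemma fvmlMoment_add_two (hp : 1 < p) (ℓ : ℕ) :
    fvmlMoment (p + 2) κ ℓ = fvmlMoment p κ ℓ - fvmlMoment p κ (ℓ + 2) := by
  unfold fvmlMoment
  rw [← integral_sub (intervalIntegrable_fvmlMoment κ hp ℓ)
    (intervalIntegrable_fvmlMoment κ hp (ℓ + 2))]
  refine integral_congr fun u hu => ?_
  rw [uIcc_of_le (by norm_num)] at hu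
  simp only [fvmlWeight_add_two hp hu]
  ring

lemma hasDerivAt_fvmlWeight_add_two {u : ℝ} (hu : u ∈ Ioo (-1 : ℝ) 1) :
    HasDerivAt (fvmlWeight (p + 2)) (-((p - 1) * (u * fvmlWeight p u))) u := by
  have hbase : HasDerivAt (fun u : ℝ => 1 - u ^ 2) (-(2 * u)) u := by
    simpa using (hasDerivAt_pow 2 u).const_sub 1
  refine (hbase.rpow_const (p := (p + 2 - 3) / 2)
    (Or.inl (one_sub_sq_pos_of_mem_Ioo hu).ne')).congr_deriv ?_
  rw [show (p + 2 - 3) / 2 - 1 = (p - 3) / 2 by ring, fvmlWeight]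
  ring

lemma continuous_fvmlWeight_add_two (hp : 1 < p) : Continuous (fvmlWeight (p + 2)) :=
  (by fun_prop : Continuous fun u : ℝ => 1 - u ^ 2).rpow_const fun _ => Or.inr (by linarith)

lemma fvmlMoment_integration_by_parts (hp : 1 < p) (ℓ : ℕ) :
    ℓ * fvmlMoment (p + 2) κ (ℓ - 1) + κ * fvmlMoment (p + 2) κ ℓ
      = (p - 1) * fvmlMoment p κ (ℓ + 1) := by
  have hp₂ : 1 < p + 2 := by linarith
  have hpow := (intervalIntegrable_fvmlMoment κ hp₂ (ℓ - 1)).const_mul (ℓ : ℝ)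
  have hexp := (intervalIntegrable_fvmlMoment κ hp₂ ℓ).const_mul κ
  have hweight := (intervalIntegrable_fvmlMoment κ hp (ℓ + 1)).const_mul (p - 1)
  have hderiv (u : ℝ) (hu : u ∈ Ioo (-1 : ℝ) 1) :
      HasDerivAt (fun u => u ^ ℓ * fvmlWeight (p + 2) u * exp (κ * u))
        (ℓ * (u ^ (ℓ - 1) * fvmlWeight (p + 2) u * exp (κ * u))
          + κ * (u ^ ℓ * fvmlWeight (p + 2) u * exp (κ * u))
          - (p - 1) * (u ^ (ℓ + 1) * fvmlWeight p u * exp (κ * u))) u := by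
    refine (((hasDerivAt_pow ℓ u).mul (hasDerivAt_fvmlWeight_add_two hu)).mul
      ((hasDerivAt_id u).const_mul κ).exp).congr_deriv ?_
    simp only [id, Pi.mul_apply]
    ring
  have hcont : Continuous fun u => u ^ ℓ * fvmlWeight (p + 2) u * exp (κ * u) :=
    ((continuous_pow ℓ).mul (continuous_fvmlWeight_add_two hp)).mul (by fun_prop)
  have hboundary : fvmlWeight (p + 2) 1 = 0 ∧ fvmlWeight (p + 2) (-1) = 0 := by
    have hzero : (0 : ℝ) ^ ((p + 2 - 3) / 2) = 0 := zero_rpow (by linarith)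
    norm_num [fvmlWeight, hzero]
  have hftc := integral_eq_sub_of_hasDerivAt_of_le (by norm_num) hcont.continuousOn hderiv
    ((hpow.add hexp).sub hweight)
  simp only [hboundary, mul_zero, zero_mul, sub_zero] at hftc
  rw [integral_sub (hpow.add hexp) hweight, integral_add hpow hexp] at hftc
  simp only [intervalIntegral.integral_const_mul] at hftc
  exact sub_eq_zero.1 hftc

lemma mul_indicator_fvmlWeight_mul_exp (p : ℝ) (ℓ : ℕ) :
    (fun u => u ^ ℓ * (Icc (-1) 1).indicator (fvmlWeight p) u * exp (κ * u))
      = (Icc (-1) 1).indicator fun u => u ^ ℓ * fvmlWeight p u * exp (κ * u) := by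
  funext u
  rw [indicator_mul_left, indicator_mul_right]

lemma tiltedMoment_indicator_fvmlWeight (p : ℝ) (ℓ : ℕ) :
    tiltedMoment ((Icc (-1) 1).indicator (fvmlWeight p)) κ ℓ = fvmlMoment p κ ℓ := by
  rw [fvmlMoment, integral_of_le (by norm_num), ← integral_Icc_eq_integral_Ioc,
    ← MeasureTheory.integral_indicator measurableSet_Icc, tiltedMoment,
    mul_indicator_fvmlWeight_mul_exp]

lemma mul_fvmlMoment_mul_sub_nonneg (hp : 1 < p) :
    0 ≤ κ * (fvmlMoment p κ 0 * fvmlMoment p κ 3 - fvmlMoment p κ 1 * fvmlMoment p κ 2) := by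
  simp only [← tiltedMoment_indicator_fvmlWeight]
  refine mul_tiltedMoment_mul_sub_nonneg (fun u => ?_) (fun u => ?_) fun ℓ => ?_
  · exact indicator_nonneg
      (fun u hu => rpow_nonneg (one_sub_sq_nonneg_of_mem_Icc hu) _) u
  · have hmem : -u ∈ Icc (-1 : ℝ) 1 ↔ u ∈ Icc (-1 : ℝ) 1 := by
      simp [mem_Icc, and_comm, neg_le]
    simp only [indicator_apply, hmem, (fvmlWeight_even p).eq]
  · have hw_int := (intervalIntegrable_iff_integrableOn_Icc_of_le (by norm_num)).1
      (intervalIntegrable_fvmlMoment κ hp ℓ)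
    rw [mul_indicator_fvmlWeight_mul_exp]
    exact hw_int.integrable_indicator measurableSet_Icc

end Moments

section MeanQuotient

variable {p : ℝ} (κ : ℝ)

lemma meanQuotient_pos (hp : 1 < p) : 0 < meanQuotient p κ :=
  div_pos (fvmlMoment_zero_pos κ (by linarith))
    (mul_pos (by linarith) (fvmlMoment_zero_pos κ hp))

lemma fvmlMoment_one_div_zero (hp : 1 < p) :
    fvmlMoment p κ 1 / fvmlMoment p κ 0 = κ * meanQuotient p κ := by
  have h₀ := fvmlMoment_zero_pos κ hp
  have hp₁ : p - 1 ≠ 0 := by linarith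
  have hparts := fvmlMoment_integration_by_parts κ hp 0
  simp only [Nat.cast_zero, zero_mul, zero_add] at hparts
  rw [meanQuotient]
  field_simp
  linarith

lemma fvmlMoment_two_div_zero (hp : 1 < p) :
    fvmlMoment p κ 2 / fvmlMoment p κ 0 = 1 - (p - 1) * meanQuotient p κ := by
  have h₀ := fvmlMoment_zero_pos κ hp
  have hp₁ : p - 1 ≠ 0 := by linarith
  rw [meanQuotient, fvmlMoment_add_two κ hp 0]
  field_simp
  ring

lemma fvmlVariance_eq (hp : 1 < p) :
    fvmlVariance p κ = 1 - (p - 1) * meanQuotient p κ - κ ^ 2 * meanQuotient p κ ^ 2 := by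
  rw [fvmlVariance, fvmlMoment_two_div_zero κ hp, fvmlMoment_one_div_zero κ hp, mul_pow]

lemma meanQuotient_mul_add (hp : 1 < p) :
    meanQuotient p κ * (p + κ ^ 2 * meanQuotient (p + 2) κ) = 1 := by
  have h₀ := fvmlMoment_zero_pos κ hp
  have : p - 1 ≠ 0 := by linarith
  have hp₂ : 1 < p + 2 := by linarith
  have hmean := (div_eq_iff (fvmlMoment_zero_pos κ hp₂).ne').1 (fvmlMoment_one_div_zero κ hp₂)
  have hparts := fvmlMoment_integration_by_parts κ hp 1
  have hadd := fvmlMoment_add_two κ hp 0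
  simp only [Nat.cast_one, one_mul, tsub_self, zero_add, Nat.reduceAdd] at hparts hadd
  rw [meanQuotient, div_mul_eq_mul_div, div_eq_one_iff_eq (by positivity)]
  linear_combination hparts - κ * hmean + (p - 1) * hadd

lemma sq_mul_meanQuotient_add_two_le (hp : 1 < p) :
    κ ^ 2 * meanQuotient (p + 2) κ ≤ κ ^ 2 * meanQuotient p κ := by
  have h₀ := fvmlMoment_zero_pos κ hp
  have hp₂ : 1 < p + 2 := by linarith
  have h₀' := fvmlMoment_zero_pos κ hp₂
  rw [sq, mul_assoc, mul_assoc, ← fvmlMoment_one_div_zero κ hp, ← fvmlMoment_one_div_zero κ hp₂,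
    mul_div_assoc', mul_div_assoc', div_le_div_iff₀ h₀' h₀, fvmlMoment_add_two κ hp 0,
    fvmlMoment_add_two κ hp 1]
  linarith [mul_fvmlMoment_mul_sub_nonneg κ hp]

lemma one_le_mul_meanQuotient_add_sq (hp : 1 < p) :
    1 ≤ p * meanQuotient p κ + κ ^ 2 * meanQuotient p κ ^ 2 := by
  have hpos := meanQuotient_pos κ hp
  calc 1 = meanQuotient p κ * (p + κ ^ 2 * meanQuotient (p + 2) κ) :=
        (meanQuotient_mul_add κ hp).symm
    _ ≤ meanQuotient p κ * (p + κ ^ 2 * meanQuotient p κ) := by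
        gcongr meanQuotient p κ * (p + ?_)
        exact sq_mul_meanQuotient_add_two_le κ hp
    _ = p * meanQuotient p κ + κ ^ 2 * meanQuotient p κ ^ 2 := by ring

lemma quadRoot_le_meanQuotient (hp : 1 < p) : quadRoot p κ ≤ meanQuotient p κ :=
  quadRoot_le_of_one_le (by linarith) (meanQuotient_pos κ hp).le
    (one_le_mul_meanQuotient_add_sq κ hp)

lemma meanQuotient_le (hp : 1 < p) :
    meanQuotient p κ ≤ 1 / (p / 2 - 1 + √((p / 2 + 1) ^ 2 + κ ^ 2)) := by
  have hp₂ : 0 < p + 2 := by linarith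
  have hroot := quadRoot_pos κ hp₂
  calc meanQuotient p κ = 1 / (p + κ ^ 2 * meanQuotient (p + 2) κ) :=
        eq_one_div_of_mul_eq_one_left (meanQuotient_mul_add κ hp)
    _ ≤ 1 / (p + κ ^ 2 * quadRoot (p + 2) κ) := by
        gcongr
        exact quadRoot_le_meanQuotient κ (by linarith)
    _ = 1 / (p / 2 - 1 + √((p / 2 + 1) ^ 2 + κ ^ 2)) := by
        rw [sq_mul_quadRoot κ hp₂]
        ring_nf

lemma one_sub_mul_sub_sq_le {a b : ℝ} (hp : 1 ≤ p) (ha : 0 ≤ a) (hab : a ≤ b) :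
    1 - (p - 1) * b - κ ^ 2 * b ^ 2 ≤ 1 - (p - 1) * a - κ ^ 2 * a ^ 2 := by
  have : 0 ≤ p - 1 := by linarith
  gcongr

lemma fvmlVariance_le_quadRoot (hp : 1 < p) : fvmlVariance p κ ≤ quadRoot p κ := by
  have hp₀ : 0 < p := by linarith
  calc fvmlVariance p κ
      = 1 - (p - 1) * meanQuotient p κ - κ ^ 2 * meanQuotient p κ ^ 2 := fvmlVariance_eq κ hp
    _ ≤ 1 - (p - 1) * quadRoot p κ - κ ^ 2 * quadRoot p κ ^ 2 :=
        one_sub_mul_sub_sq_le κ hp.le (quadRoot_pos κ hp₀).le (quadRoot_le_meanQuotient κ hp)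
    _ = quadRoot p κ := by linear_combination -mul_quadRoot_add_sq κ hp₀

lemma le_fvmlVariance (hp : 1 < p) :
    (3 * p / 2 + 1 - √((p / 2 + 1) ^ 2 + κ ^ 2)) / (p / 2 - 1 + √((p / 2 + 1) ^ 2 + κ ^ 2)) ^ 2
      ≤ fvmlVariance p κ := by
  rw [fvmlVariance_eq κ hp]
  refine le_trans (le_of_eq ?_)
    (one_sub_mul_sub_sq_le κ hp.le (meanQuotient_pos κ hp).le (meanQuotient_le κ hp))
  have hsq : √((p / 2 + 1) ^ 2 + κ ^ 2) ^ 2 = (p / 2 + 1) ^ 2 + κ ^ 2 := sq_sqrt (by positivity)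
  have hle : p / 2 + 1 ≤ √((p / 2 + 1) ^ 2 + κ ^ 2) := le_sqrt_of_sq_le (by nlinarith)
  have hpos : 0 < p / 2 - 1 + √((p / 2 + 1) ^ 2 + κ ^ 2) := by linarith
  generalize √((p / 2 + 1) ^ 2 + κ ^ 2) = s at hsq hpos ⊢
  have hnum : 3 * p / 2 + 1 - s = (p / 2 - 1 + s) ^ 2 - (p - 1) * (p / 2 - 1 + s) - κ ^ 2 := by
    linear_combination -hsq
  rw [hnum]
  generalize p / 2 - 1 + s = d at hpos ⊢
  field_simp

end MeanQuotient

lemma etilde2_eq_fvmlVariance (p : ℕ) (κ : ℝ) : etilde2 p κ = fvmlVariance p κ := rfl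

theorem etilde2_bounds_general {p : ℝ} (hp : 1 < p) (κ : ℝ) :
    (3 / 2 + 1 / p - √((1 / 2 + 1 / p) ^ 2 + (κ / p) ^ 2)) /
        (p * (1 / 2 - 1 / p + √((1 / 2 + 1 / p) ^ 2 + (κ / p) ^ 2)) ^ 2) ≤ fvmlVariance p κ ∧
      fvmlVariance p κ ≤ 1 / (p * (1 / 2 + √(1 / 4 + (κ / p) ^ 2))) := by
  have hp₀ : 0 < p := by linarith
  constructor
  · convert le_fvmlVariance κ hp using 1
    rw [show p / 2 + 1 = p * (1 / 2 + 1 / p) by field_simp, ← mul_sqrt_sq_add_div_sq κ hp₀]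
    generalize √((1 / 2 + 1 / p) ^ 2 + (κ / p) ^ 2) = t
    rw [show p / 2 - 1 + p * t = p * (1 / 2 - 1 / p + t) by field_simp, mul_pow,
      show 3 * p / 2 + 1 - p * t = p * (3 / 2 + 1 / p - t) by field_simp, sq p, mul_assoc p p,
      mul_div_mul_left _ _ hp₀.ne']
  · convert fvmlVariance_le_quadRoot κ hp using 1
    rw [quadRoot, show p / 2 = p * (1 / 2) by ring, ← mul_sqrt_sq_add_div_sq κ hp₀, ← mul_add]
    norm_num

theorem etilde2_bounds (p : ℕ) (hp : 2 ≤ p) (κ : ℝ) (hκ : 0 < κ) :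
    (3 / 2 + 1 / p - Real.sqrt ((1 / 2 + 1 / p) ^ 2 + (κ / p) ^ 2)) /
        ((p : ℝ) * (1 / 2 - 1 / p + Real.sqrt ((1 / 2 + 1 / p) ^ 2 + (κ / p) ^ 2)) ^ 2) ≤
      etilde2 p κ ∧
      etilde2 p κ ≤ 1 / ((p : ℝ) * (1 / 2 + Real.sqrt (1 / 4 + (κ / p) ^ 2))) := by
  rw [etilde2_eq_fvmlVariance]
  exact etilde2_bounds_general (mod_cast hp) κ
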